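/- Let S be any of the four sign strings of length 12 that are cyclic rotations of (+,+,−,−,+,+,−,−,+,+,−,−). Then there is exactly one dominant state string J for S such that the web tensor of some (equivalently, any) complete execution of the growth algorithm from (S,J) fails the negative-exponent property relative to J; for every other dominant state string J for S, the web tensor has the negative-exponent property relative to J. -/

import Mathlib

noncomputable section

/-- The ground field `K = ℚ(v)`. -/
abbrev K : Type := RatFunc ℚ

/-- The indeterminate `v`. -/
def v : K := RatFunc.X

/-- The three states `-1, 0, 1`. -/
inductive St where
  | neg : St
  | zero : St
  | pos : St
deriving DecidableEq

instance : Fintype St where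
  elems := {St.neg, St.zero, St.pos}
  complete := fun x => by cases x <;> simp

/-- The integer value of a state. -/
def stval : St → ℤ
  | .neg => -1
  | .zero => 0
  | .pos => 1

/-- The order `-1 < 0 < 1` on states. -/
def stLt (a b : St) : Prop := stval a < stval b

/-- The weight `μ(s, j) ∈ ℤ²`; `true` is the sign `+`, `false` is `-`. -/
def wt : Bool → St → ℤ × ℤ
  | true, .pos => (1, 0)
  | true, .zero => (-1, 1)
  | true, .neg => (0, -1)
  | false, .pos => (0, 1)
  | false, .zero => (1, -1)
  | false, .neg => (-1, 0)

/-- Total weight `Σ μ(s_k, j_k)` of a sign string and a state string. -/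
def wtSum (S : List Bool) (J : List St) : ℤ × ℤ :=
  ((S.zip J).map fun p => wt p.1 p.2).sum

/-- A state string is dominant if its lattice path stays in the dominant
Weyl chamber and returns to the origin. -/
def Dominant (S : List Bool) (J : List St) : Prop :=
  J.length = S.length ∧
  (∀ k : ℕ, 0 ≤ (wtSum (S.take k) (J.take k)).1 ∧ 0 ≤ (wtSum (S.take k) (J.take k)).2) ∧
  wtSum S J = 0

/-- Coefficients of `b^{+-}(1) ∈ V⁺ ⊗ V⁻`. -/
def bCpm : St → St → K
  | .pos, .neg => 1
  | .zero, .zero => v⁻¹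
  | .neg, .pos => v⁻¹ ^ 2
  | _, _ => 0

/-- Coefficients of `b^{-+}(1) ∈ V⁻ ⊗ V⁺`. -/
def bCmp : St → St → K
  | .pos, .neg => 1
  | .zero, .zero => v⁻¹
  | .neg, .pos => v⁻¹ ^ 2
  | _, _ => 0

/-- Matrix entries of `σ_{+-} : V⁺ ⊗ V⁻ → K`. -/
def sCpm : St → St → K
  | .neg, .pos => 1
  | .zero, .zero => v
  | .pos, .neg => v ^ 2
  | _, _ => 0

/-- Matrix entries of `σ_{-+} : V⁻ ⊗ V⁺ → K`. -/
def sCmp : St → St → K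
  | .neg, .pos => 1
  | .zero, .zero => v
  | .pos, .neg => v ^ 2
  | _, _ => 0

/-- `tYpp a b c` is the coefficient of `e_a ⊗ e_b` in `t^{++}_-(e_c)`. -/
def tYpp : St → St → St → K
  | .pos, .zero, .pos => 1
  | .zero, .pos, .pos => v⁻¹
  | .pos, .neg, .zero => 1
  | .neg, .pos, .zero => v⁻¹
  | .zero, .neg, .neg => 1
  | .neg, .zero, .neg => v⁻¹
  | _, _, _ => 0

/-- `tYmm a b c` is the coefficient of `e_a ⊗ e_b` in `t^{--}_+(e_c)`. -/
def tYmm : St → St → St → K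
  | .pos, .zero, .pos => 1
  | .zero, .pos, .pos => v⁻¹
  | .pos, .neg, .zero => 1
  | .neg, .pos, .zero => v⁻¹
  | .zero, .neg, .neg => 1
  | .neg, .zero, .neg => v⁻¹
  | _, _, _ => 0

/-- `tLpp a b c` is the coefficient of `e_c` in `t^-_{++}(e_a ⊗ e_b)`. -/
def tLpp : St → St → St → K
  | .pos, .zero, .pos => v
  | .zero, .pos, .pos => 1
  | .pos, .neg, .zero => v
  | .neg, .pos, .zero => 1
  | .zero, .neg, .neg => v
  | .neg, .zero, .neg => 1
  | _, _, _ => 0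

/-- `tLmm a b c` is the coefficient of `e_c` in `t^+_{--}(e_a ⊗ e_b)`. -/
def tLmm : St → St → St → K
  | .pos, .zero, .pos => v
  | .zero, .pos, .pos => 1
  | .pos, .neg, .zero => v
  | .neg, .pos, .zero => 1
  | .zero, .neg, .neg => v
  | .neg, .zero, .neg => 1
  | _, _, _ => 0

/-- Matrix entries of the H-map
`(id_{V⁺} ⊗ t^-_{++}) ∘ (t^{++}_- ⊗ id_{V⁺}) : V⁻ ⊗ V⁺ → V⁺ ⊗ V⁻`:
`HCpm a b c d` is the coefficient of `e_a ⊗ e_b` in the image of `e_c ⊗ e_d`. -/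
def HCpm (a b c d : St) : K := ∑ y : St, tYpp a y c * tLpp y d b

/-- Matrix entries of the H-map
`(t^-_{++} ⊗ id_{V⁺}) ∘ (id_{V⁺} ⊗ t^{++}_-) : V⁺ ⊗ V⁻ → V⁻ ⊗ V⁺`:
`HCmp a b c d` is the coefficient of `e_a ⊗ e_b` in the image of `e_c ⊗ e_d`. -/
def HCmp (a b c d : St) : K := ∑ x : St, tLpp c x a * tYpp x b d

/-- State patterns of the three H-rules: `(j_k, j_{k+1})` on top, the
replacement below. -/
inductive HPat : St → St → St → St → Prop where
  | h1 : HPat .pos .zero .zero .pos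
  | h2 : HPat .zero .zero .neg .pos
  | h3 : HPat .zero .neg .neg .zero

/-- State patterns of the three Y-rules. -/
inductive YPat : St → St → St → Prop where
  | y1 : YPat .pos .zero .pos
  | y2 : YPat .pos .neg .zero
  | y3 : YPat .zero .neg .neg

/-- One application of a growth rule, rewriting `(S, J)` to `(S', J')`. -/
inductive Step : List Bool → List St → List Bool → List St → Prop where
  | hstep (A B : List Bool) (P Q : List St) (s1 s2 : Bool) (j1 j2 j1' j2' : St)
      (hl : A.length = P.length) (hs : s1 ≠ s2) (hp : HPat j1 j2 j1' j2') :
      Step (A ++ s1 :: s2 :: B) (P ++ j1 :: j2 :: Q)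
        (A ++ (!s1) :: (!s2) :: B) (P ++ j1' :: j2' :: Q)
  | ustep (A B : List Bool) (P Q : List St) (s1 s2 : Bool)
      (hl : A.length = P.length) (hs : s1 ≠ s2) :
      Step (A ++ s1 :: s2 :: B) (P ++ St.pos :: St.neg :: Q) (A ++ B) (P ++ Q)
  | ystep (A B : List Bool) (P Q : List St) (s : Bool) (j1 j2 j' : St)
      (hl : A.length = P.length) (hp : YPat j1 j2 j') :
      Step (A ++ s :: s :: B) (P ++ j1 :: j2 :: Q) (A ++ (!s) :: B) (P ++ j' :: Q)

/-- A complete execution of the growth algorithm from `(S, J)` down to the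
pair of empty strings. -/
inductive Exec : List Bool → List St → Type where
  | nil : Exec [] []
  | hstep (A B : List Bool) (P Q : List St) (s1 s2 : Bool) (j1 j2 j1' j2' : St)
      (hl : A.length = P.length) (hs : s1 ≠ s2) (hp : HPat j1 j2 j1' j2')
      (e : Exec (A ++ (!s1) :: (!s2) :: B) (P ++ j1' :: j2' :: Q)) :
      Exec (A ++ s1 :: s2 :: B) (P ++ j1 :: j2 :: Q)
  | ustep (A B : List Bool) (P Q : List St) (s1 s2 : Bool)
      (hl : A.length = P.length) (hs : s1 ≠ s2)
      (e : Exec (A ++ B) (P ++ Q)) :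
      Exec (A ++ s1 :: s2 :: B) (P ++ St.pos :: St.neg :: Q)
  | ystep (A B : List Bool) (P Q : List St) (s : Bool) (j1 j2 j' : St)
      (hl : A.length = P.length) (hp : YPat j1 j2 j')
      (e : Exec (A ++ (!s) :: B) (P ++ j' :: Q)) :
      Exec (A ++ s :: s :: B) (P ++ j1 :: j2 :: Q)

/-- The web tensor of an execution, as coordinates with respect to the basis
`e^S_J` of `V^S`: `web e L` is the coefficient of `e^S_L`. -/
def web : {S : List Bool} → {J : List St} → Exec S J → List St → K
  | _, _, .nil, L => if L = [] then 1 else 0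
  | _, _, .hstep A _ _ _ s1 _ _ _ _ _ _ _ _ e, L =>
      match L.drop A.length with
      | a :: b :: R =>
          ∑ c : St, ∑ d : St,
            (if s1 then HCpm a b c d else HCmp a b c d) *
              web e (L.take A.length ++ c :: d :: R)
      | _ => 0
  | _, _, .ustep A _ _ _ s1 _ _ _ e, L =>
      match L.drop A.length with
      | a :: b :: R => (if s1 then bCpm a b else bCmp a b) * web e (L.take A.length ++ R)
      | _ => 0
  | _, _, .ystep A _ _ _ s _ _ _ _ _ e, L =>
      match L.drop A.length with
      | a :: b :: R =>
          ∑ c : St, (if s then tYpp a b c else tYmm a b c) * web e (L.take A.length ++ c :: R)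
      | _ => 0

/-- `c ∈ v⁻¹ ℤ[v⁻¹]`: a polynomial in `v⁻¹` with zero constant term. -/
def ZeroConst (c : K) : Prop :=
  ∃ p : Polynomial ℤ, p.coeff 0 = 0 ∧ c = Polynomial.aeval v⁻¹ p

/-- `x` has the negative-exponent property relative to a state string `J`
(`n` is the length of the ambient sign string). -/
def NegExpProp (n : ℕ) (x : List St → K) (J : List St) : Prop :=
  x J = 1 ∧ ∀ J' : List St, J'.length = n → J' ≠ J → ZeroConst (x J')

/-- `c ∈ ℕ[v, v⁻¹]`: a Laurent polynomial with nonnegative integer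
coefficients. -/
def IsNatLaurent (c : K) : Prop :=
  ∃ (p : Polynomial ℕ) (m : ℕ), c = v⁻¹ ^ m * Polynomial.aeval v p

/-- `c ∈ ℤ[v⁻¹]`. -/
def InZInv (c : K) : Prop := ∃ p : Polynomial ℤ, c = Polynomial.aeval v⁻¹ p

/-- Property P: all coefficients lie in `ℤ[v⁻¹]` and at most one of them has a
nonzero constant term. -/
def PropP (n : ℕ) (x : List St → K) : Prop :=
  (∀ J : List St, J.length = n → InZInv (x J)) ∧
  ∀ J1 J2 : List St, J1.length = n → J2.length = n →
    ¬ ZeroConst (x J1) → ¬ ZeroConst (x J2) → J1 = J2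

/-- The sign string `(+,+,−,−,+,+,−,−,+,+,−,−)`. -/
def base : List Bool :=
  [true, true, false, false, true, true, false, false, true, true, false, false]

/-!
Zip a sign string and a state string into a word. A growth step then rewrites two adjacent letters
and contributes one of three linear maps `H`, `U`, `Y`, whose matrices do not depend on the signs.
Two growth rules can overlap in four ways only, and each time the two outcomes are joined again
with equal products of maps, by relations such as `Y Y = (id ⊗ H) U`. By the diamond property all
complete executions from `(S, J)` therefore have the same web tensor.

Every rule sends the leading basis vector of the new word to that of the old one with coefficient
`1`, so the coefficient of `e_J` in the web tensor is exactly `1`, and only the nonnegative powers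
of `v` in the other coefficients matter. Since `H` raises exponents by at most `1` while `U` and `Y`
do not raise them, terms of very negative exponent can be dropped all along the computation. What is
left is `e_J` alone for all but one of the 513 dominant state strings, and `e_J + e_L` with `L ≠ J`
for the remaining one.

Rotating the sign string by two places reverses all signs. This reflects the lattice paths and keeps
the web tensors, so it is enough to treat two of the four rotations.
-/

/-! ### Weighted rewriting -/

/-- A complete reduction of `a` to `z` by the weighted rewriting relation `R`, together with the
product of its weights, the first rewriting on the left. -/
inductive Reaches {α M : Type*} [Monoid M] (R : α → M → α → Prop) (z : α) : α → M → Prop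
  | refl : Reaches R z z 1
  | step {a b : α} {φ ψ : M} : R a φ b → Reaches R z b ψ → Reaches R z a (φ * ψ)

/-- The weighted diamond property: two rewritings of the same object can be completed to a square
of commuting weights. -/
def WeightedDiamond {α M : Type*} [Monoid M] (R : α → M → α → Prop) : Prop :=
  ∀ ⦃a φ b ψ c⦄, R a φ b → R a ψ c →
    (φ = ψ ∧ b = c) ∨ ∃ d φ' ψ', R b φ' d ∧ R c ψ' d ∧ φ * φ' = ψ * ψ'

section Reaches

variable {α M : Type*} [Monoid M] {R : α → M → α → Prop} {z : α}

theorem Reaches.exists_of_rewrite (hR : WeightedDiamond R) (hz : ∀ φ b, ¬R z φ b) {a b : α}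
    {φ θ : M} (h : Reaches R z a θ) (hb : R a φ b) : ∃ ψ, Reaches R z b ψ ∧ θ = φ * ψ := by
  induction h generalizing b φ with
  | refl => exact absurd hb (hz _ _)
  | step hc hr ih =>
    obtain ⟨rfl, rfl⟩ | ⟨d, φ', ψ', hbd, hcd, hcomm⟩ := hR hb hc
    · exact ⟨_, hr, rfl⟩
    · obtain ⟨χ, hd, rfl⟩ := ih hcd
      exact ⟨φ' * χ, .step hbd hd, by rw [← mul_assoc, ← mul_assoc, hcomm]⟩

theorem Reaches.unique (hR : WeightedDiamond R) (hz : ∀ φ b, ¬R z φ b) {a : α} {θ θ' : M}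
    (h : Reaches R z a θ) (h' : Reaches R z a θ') : θ = θ' := by
  induction h generalizing θ' with
  | refl =>
    cases h' with
    | refl => rfl
    | step hb _ => exact absurd hb (hz _ _)
  | step hb _ ih =>
    obtain ⟨ψ, hψ, rfl⟩ := h'.exists_of_rewrite hR hz hb
    rw [ih hψ]

end Reaches

/-! ### The maps attached to the growth rules -/

/-- Vectors of `⨁ₙ K³^{⊗n}` by their coordinates; the signs of the factors do not affect the
matrices of the generating maps and are not recorded. Strings of every length are allowed at once,
so this is the direct product rather than the direct sum. -/
abbrev Tensor : Type := List St → K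

/-- The map `id ⊗ φ` acting on the tensor factors after the first. -/
def idTensor (φ : Module.End K Tensor) : Module.End K Tensor where
  toFun f
    | [] => 0
    | x :: L => φ (fun T => f (x :: T)) L
  map_add' f g := by
    ext (_ | ⟨x, L⟩)
    · simp
    · exact congrFun (φ.map_add (fun T => f (x :: T)) fun T => g (x :: T)) L
  map_smul' c f := by
    ext (_ | ⟨x, L⟩)
    · simp
    · exact congrFun (φ.map_smul c fun T => f (x :: T)) L

@[simp] theorem idTensor_nil (φ : Module.End K Tensor) (f : Tensor) : idTensor φ f [] = 0 := rfl

@[simp] theorem idTensor_cons (φ : Module.End K Tensor) (f : Tensor) (x : St) (L : List St) :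
    idTensor φ f (x :: L) = φ (fun T => f (x :: T)) L := rfl

theorem idTensor_mul (φ ψ : Module.End K Tensor) :
    idTensor (φ * ψ) = idTensor φ * idTensor ψ := by
  ext f (_ | ⟨x, L⟩) <;> rfl

/-- The elementary map `e_N ⊗ e_R ↦ e_M ⊗ e_R`, which kills the basis vectors not starting
with `N`. -/
def replacePrefix (M N : List St) : Module.End K Tensor where
  toFun f L := (L.dropPrefix? M).elim 0 fun R => f (N ++ R)
  map_add' f g := by ext L; cases h : L.dropPrefix? M <;> simp [h]
  map_smul' c f := by ext L; cases h : L.dropPrefix? M <;> simp [h]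

theorem replacePrefix_apply (M N : List St) (f : Tensor) (L : List St) :
    replacePrefix M N f L = (L.dropPrefix? M).elim 0 fun R => f (N ++ R) := rfl

/-- The three types of growth rule, named after the shape of the web they create. -/
inductive Kind where
  | H | U | Y
deriving DecidableEq

/-- The nonzero matrix entries of the map attached to a type of growth rule, as triples
`(d, top, bottom)`: the image of `e_bottom` contains `e_top` with coefficient `v ^ d`. -/
def entries : Kind → List (ℤ × List St × List St)
  | .H => [(0, [.neg, .neg], [.neg, .neg]), (0, [.neg, .zero], [.zero, .neg]),
      (-1, [.neg, .pos], [.neg, .pos]), (0, [.neg, .pos], [.zero, .zero]),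
      (0, [.zero, .neg], [.neg, .zero]), (0, [.zero, .zero], [.neg, .pos]),
      (0, [.zero, .zero], [.pos, .neg]), (0, [.zero, .pos], [.pos, .zero]),
      (0, [.pos, .neg], [.zero, .zero]), (1, [.pos, .neg], [.pos, .neg]),
      (0, [.pos, .zero], [.zero, .pos]), (0, [.pos, .pos], [.pos, .pos])]
  | .U => [(0, [.pos, .neg], []), (-1, [.zero, .zero], []), (-2, [.neg, .pos], [])]
  | .Y => [(0, [.pos, .zero], [.pos]), (-1, [.zero, .pos], [.pos]),
      (0, [.pos, .neg], [.zero]), (-1, [.neg, .pos], [.zero]),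
      (0, [.zero, .neg], [.neg]), (-1, [.neg, .zero], [.neg])]

/-- The map attached to a growth rule, acting on the leftmost tensor factors. -/
def vertexMap (κ : Kind) : Module.End K Tensor :=
  ((entries κ).map fun t => v ^ t.1 • replacePrefix t.2.1 t.2.2).sum

/-- The number of factors in the source of the map attached to a growth rule; the target always
has two. -/
def width : Kind → ℕ
  | .H => 2
  | .U => 0
  | .Y => 1

theorem length_of_mem_entries (κ : Kind) :
    ∀ t ∈ entries κ, t.2.1.length = 2 ∧ t.2.2.length = width κ := by
  cases κ <;> decide

theorem iterate_idTensor_append {k : ℕ} (φ : Module.End K Tensor) (f : Tensor) (A R : List St)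
    (hA : A.length = k) : idTensor^[k] φ f (A ++ R) = φ (fun T => f (A ++ T)) R := by
  induction A generalizing k f with
  | nil => subst hA; rfl
  | cons x A ih =>
    subst hA
    rw [List.length_cons, Function.iterate_succ_apply', List.cons_append, idTensor_cons, ih _ rfl]
    rfl

theorem iterate_idTensor_of_length_lt {k : ℕ} (φ : Module.End K Tensor) (f : Tensor)
    {L : List St} (hL : L.length < k) : idTensor^[k] φ f L = 0 := by
  induction k generalizing f L with
  | zero => simp at hL
  | succ k ih =>
    rw [Function.iterate_succ_apply']
    cases L with
    | nil => rfl
    | cons x L => exact ih _ (by simpa using hL)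

theorem dropPrefix?_eq_some_iff_eq_append {α : Type*} [BEq α] [LawfulBEq α] {L A R : List α} :
    L.dropPrefix? A = some R ↔ L = A ++ R := by
  simp [List.dropPrefix?_eq_some_iff]

theorem dropPrefix?_append_of_length_eq {α : Type*} [DecidableEq α] {A M : List α} (R : List α)
    (h : A.length = M.length) : (A ++ R).dropPrefix? M = if A = M then some R else none := by
  split_ifs with hAM
  · rw [dropPrefix?_eq_some_iff_eq_append, hAM]
  · refine Option.eq_none_iff_forall_ne_some.2 fun T hT => hAM ?_
    exact (List.append_inj (dropPrefix?_eq_some_iff_eq_append.1 hT) h).1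

theorem dropPrefix?_of_length_lt {α : Type*} [BEq α] [LawfulBEq α] {L M : List α}
    (h : L.length < M.length) : L.dropPrefix? M = none := by
  refine Option.eq_none_iff_forall_ne_some.2 fun T hT => ?_
  obtain rfl := dropPrefix?_eq_some_iff_eq_append.1 hT
  simp at h

theorem replacePrefix_mul_iterate_idTensor (M N : List St) (φ : Module.End K Tensor) :
    replacePrefix M N * idTensor^[N.length] φ = idTensor^[M.length] φ * replacePrefix M N := by
  ext f L
  simp only [Module.End.mul_apply]
  obtain hL | hL := lt_or_ge L.length M.length
  · rw [iterate_idTensor_of_length_lt _ _ hL, replacePrefix_apply, dropPrefix?_of_length_lt hL]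
    rfl
  · obtain ⟨A, R, rfl, hA⟩ : ∃ A R, L = A ++ R ∧ A.length = M.length :=
      ⟨_, _, (List.take_append_drop M.length L).symm, by simp [hL]⟩
    simp only [iterate_idTensor_append _ _ _ _ hA, replacePrefix_apply,
      dropPrefix?_append_of_length_eq _ hA]
    split_ifs
    · simp [iterate_idTensor_append]
    · exact (congrFun φ.map_zero R).symm

theorem vertexMap_apply (κ : Kind) (f : Tensor) :
    vertexMap κ f = ((entries κ).map fun t => v ^ t.1 • replacePrefix t.2.1 t.2.2 f).sum := by
  rw [vertexMap, ← LinearMap.applyₗ_apply_apply f, map_list_sum, List.map_map]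
  rfl

theorem vertexMap_mul_iterate_idTensor (κ : Kind) (φ : Module.End K Tensor) :
    vertexMap κ * idTensor^[width κ] φ = idTensor (idTensor φ) * vertexMap κ := by
  rw [vertexMap, ← List.sum_map_mul_right, ← List.sum_map_mul_left]
  refine congrArg List.sum (List.map_congr_left fun t ht => ?_)
  obtain ⟨hM, hN⟩ := length_of_mem_entries κ t ht
  rw [smul_mul_assoc, mul_smul_comm, ← hN, replacePrefix_mul_iterate_idTensor, hM]
  rfl

theorem v_ne_zero : v ≠ 0 := RatFunc.X_ne_zero

@[simp] theorem vertexMap_nil (κ : Kind) (f : Tensor) : vertexMap κ f [] = 0 := by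
  cases κ <;> simp [vertexMap_apply, entries, replacePrefix_apply, List.dropPrefix?]

@[simp] theorem vertexMap_singleton (κ : Kind) (f : Tensor) (a : St) : vertexMap κ f [a] = 0 := by
  cases κ <;> cases a <;> simp [vertexMap_apply, entries, replacePrefix_apply, List.dropPrefix?]

theorem vertexMap_cons_cons (κ : Kind) (f : Tensor) (a b : St) (R : List St) :
    vertexMap κ f (a :: b :: R) =
      (((entries κ).filter (·.2.1 = [a, b])).map fun t => v ^ t.1 * f (t.2.2 ++ R)).sum := by
  have hdrop (t : ℤ × List St × List St) (ht : t ∈ entries κ) :=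
    dropPrefix?_append_of_length_eq (A := [a, b]) R (length_of_mem_entries κ t ht).1.symm
  rw [vertexMap_apply]
  generalize entries κ = l at hdrop ⊢
  induction l with
  | nil => rfl
  | cons t l ih =>
    obtain ⟨k, M, N⟩ := t
    obtain ⟨ht, hl⟩ := List.forall_mem_cons.1 hdrop
    rw [List.cons_append, List.cons_append, List.nil_append] at ht
    rcases eq_or_ne [a, b] M with rfl | hM
    · simp [ih hl, replacePrefix_apply, List.dropPrefix?]
    · simp [ih hl, replacePrefix_apply, ht, hM, hM.symm]

theorem vertexMap_H_mul_idTensor_Y :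
    vertexMap .H * idTensor (vertexMap .Y) = idTensor (vertexMap .H) * vertexMap .Y := by
  ext f (_ | ⟨a, _ | ⟨b, _ | ⟨c, R⟩⟩⟩)
  · simp
  · simp
  · cases a <;> cases b <;> simp [vertexMap_cons_cons, entries, List.filter]
  · cases a <;> cases b <;> cases c <;>
      simp [vertexMap_cons_cons, entries, List.filter, v_ne_zero]

theorem vertexMap_Y_mul_Y :
    vertexMap .Y * vertexMap .Y = idTensor (vertexMap .H) * vertexMap .U := by
  ext f (_ | ⟨a, _ | ⟨b, _ | ⟨c, R⟩⟩⟩)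
  · simp
  · simp
  · cases a <;> cases b <;> simp [vertexMap_cons_cons, entries, List.filter]
  · cases a <;> cases b <;> cases c <;>
      simp [vertexMap_cons_cons, entries, List.filter, v_ne_zero, pow_two, mul_assoc]

theorem vertexMap_H_mul_idTensor_U :
    vertexMap .H * idTensor (vertexMap .U) = idTensor (vertexMap .Y) * vertexMap .Y := by
  ext f (_ | ⟨a, _ | ⟨b, _ | ⟨c, R⟩⟩⟩)
  · simp
  · simp
  · cases a <;> cases b <;> simp [vertexMap_cons_cons, entries, List.filter]
  · cases a <;> cases b <;> cases c <;>
      simp [vertexMap_cons_cons, entries, List.filter, v_ne_zero, pow_two, mul_assoc]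

theorem vertexMap_Y_mul_U :
    vertexMap .Y * vertexMap .U = idTensor (vertexMap .Y) * vertexMap .U := by
  ext f (_ | ⟨a, _ | ⟨b, _ | ⟨c, R⟩⟩⟩)
  · simp
  · simp
  · cases a <;> cases b <;> simp [vertexMap_cons_cons, entries, List.filter]
  · cases a <;> cases b <;> cases c <;>
      simp [vertexMap_cons_cons, entries, List.filter, pow_two, mul_assoc]

theorem vertexMap_U_cons_cons (s : Bool) (f : Tensor) (a b : St) (R : List St) :
    vertexMap .U f (a :: b :: R) = (if s then bCpm a b else bCmp a b) * f R := by
  cases s <;> cases a <;> cases b <;>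
    simp [vertexMap_cons_cons, entries, List.filter, bCpm, bCmp]

theorem sum_st (g : St → K) : ∑ c, g c = g .neg + g .zero + g .pos := by
  change ∑ c ∈ {St.neg, St.zero, St.pos}, g c = _
  simp [add_assoc]

theorem vertexMap_Y_cons_cons (s : Bool) (f : Tensor) (a b : St) (R : List St) :
    vertexMap .Y f (a :: b :: R) =
      ∑ c, (if s then tYpp a b c else tYmm a b c) * f (c :: R) := by
  cases s <;> cases a <;> cases b <;>
    simp [vertexMap_cons_cons, entries, List.filter, tYpp, tYmm, sum_st]

theorem vertexMap_H_cons_cons (s : Bool) (f : Tensor) (a b : St) (R : List St) :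
    vertexMap .H f (a :: b :: R) =
      ∑ c, ∑ d, (if s then HCpm a b c d else HCmp a b c d) * f (c :: d :: R) := by
  cases s <;> cases a <;> cases b <;>
    simp [vertexMap_cons_cons, entries, List.filter, HCpm, HCmp, tYpp, tLpp, sum_st, v_ne_zero]

/-! ### Growth as a confluent rewriting system -/

/-- A sign together with a state. -/
abbrev Letter : Type := Bool × St

/-- A sign string and a state string of the same length, zipped together. -/
abbrev Word : Type := List Letter

/-- The growth rule applicable to two adjacent letters, with the letters it puts in their place. -/
def rule : Letter → Letter → Option (Kind × Word)
  | (s, a), (t, b) =>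
    match s == t, a, b with
    | true, .pos, .zero => some (.Y, [(!s, .pos)])
    | true, .pos, .neg => some (.Y, [(!s, .zero)])
    | true, .zero, .neg => some (.Y, [(!s, .neg)])
    | false, .pos, .neg => some (.U, [])
    | false, .pos, .zero => some (.H, [(!s, .zero), (!t, .pos)])
    | false, .zero, .zero => some (.H, [(!s, .neg), (!t, .pos)])
    | false, .zero, .neg => some (.H, [(!s, .neg), (!t, .zero)])
    | _, _, _ => none

theorem length_of_rule {x y : Letter} {κ : Kind} {M : Word} (h : rule x y = some (κ, M)) :
    M.length = width κ := by
  have : ∀ x y : Letter, ∀ r ∈ rule x y, r.2.length = width r.1 := by decide +kernel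
  exact this x y _ h

/-- One growth step between words, with the map that it contributes to the web tensor. -/
inductive Rewrite : Word → Module.End K Tensor → Word → Prop
  | here {x y : Letter} {κ : Kind} {M : Word} (h : rule x y = some (κ, M)) (B : Word) :
      Rewrite (x :: y :: B) (vertexMap κ) (M ++ B)
  | there (x : Letter) {W X : Word} {φ : Module.End K Tensor} :
      Rewrite W φ X → Rewrite (x :: W) (idTensor φ) (x :: X)

section Rewrite

variable {x y : Letter} {κ : Kind} {M W X : Word} {φ : Module.End K Tensor}

theorem Rewrite.of_rule {B : Word} (h : rule x y = some (κ, M))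
    (hX : M ++ B = X) : Rewrite (x :: y :: B) (vertexMap κ) X :=
  hX ▸ .here h B

theorem Rewrite.append_left (h : Rewrite W φ X) (A : Word) :
    Rewrite (A ++ W) (idTensor^[A.length] φ) (A ++ X) := by
  induction A with
  | nil => exact h
  | cons x A ih =>
    rw [List.length_cons, Function.iterate_succ_apply']
    exact .there x ih

theorem Rewrite.append_right (h : Rewrite W φ X) (B : Word) : Rewrite (W ++ B) φ (X ++ B) := by
  induction h with
  | here h C => simpa using Rewrite.here h (C ++ B)
  | there x _ ih => exact .there x ih

theorem not_rewrite_nil (φ : Module.End K Tensor) (X : Word) : ¬Rewrite [] φ X := nofun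

theorem exists_rewrite_of_overlap {x y z : Letter} {κ₁ κ₂ : Kind} {M₁ M₂ : Word}
    (h₁ : rule x y = some (κ₁, M₁)) (h₂ : rule y z = some (κ₂, M₂)) :
    ∃ φ ψ Z, Rewrite (M₁ ++ [z]) φ Z ∧ Rewrite (x :: M₂) ψ Z ∧
      vertexMap κ₁ * φ = idTensor (vertexMap κ₂) * ψ := by
  obtain ⟨s, a⟩ := x
  obtain ⟨t, b⟩ := y
  obtain ⟨u, c⟩ := z
  cases s <;> cases t <;> cases a <;> cases b <;> cases h₁ <;>
    cases u <;> cases c <;> cases h₂ <;>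
    first
    | exact ⟨_, _, _, .there _ (.of_rule rfl rfl), .of_rule rfl rfl, vertexMap_H_mul_idTensor_Y⟩
    | exact ⟨_, _, _, .of_rule rfl rfl, .of_rule rfl rfl, vertexMap_Y_mul_Y⟩
    | exact ⟨_, _, _, .there _ (.of_rule rfl rfl), .of_rule rfl rfl, vertexMap_H_mul_idTensor_U⟩
    | exact ⟨_, _, _, .of_rule rfl rfl, .of_rule rfl rfl, vertexMap_Y_mul_U⟩

theorem Rewrite.diamond_here {B : Word} (h : rule x y = some (κ, M))
    (hX : Rewrite (x :: y :: B) φ X) :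
    (vertexMap κ = φ ∧ M ++ B = X) ∨ ∃ Z φ₁ φ₂, Rewrite (M ++ B) φ₁ Z ∧ Rewrite X φ₂ Z ∧
      vertexMap κ * φ₁ = φ * φ₂ := by
  rcases hX with ⟨h', _⟩ | ⟨_, ⟨h', C⟩ | ⟨_, hX⟩⟩
  · obtain ⟨rfl, rfl⟩ : κ = _ ∧ M = _ := by simpa [h] using h'
    exact .inl ⟨rfl, rfl⟩
  · obtain ⟨φ₁, φ₂, Z, h₁, h₂, hcomm⟩ := exists_rewrite_of_overlap h h'
    exact .inr ⟨_, φ₁, φ₂, by simpa using h₁.append_right C, h₂.append_right C, hcomm⟩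
  · refine .inr ⟨_, _, _, hX.append_left M, .here h _, ?_⟩
    rw [length_of_rule h, vertexMap_mul_iterate_idTensor]

theorem Rewrite.weightedDiamond : WeightedDiamond Rewrite := by
  intro W φ X ψ Y hX hY
  induction hX generalizing ψ Y with
  | here h B => exact diamond_here h hY
  | there x hX ih =>
    rcases hY with ⟨h, _⟩ | ⟨_, hY⟩
    · obtain ⟨hφ, hX⟩ | ⟨Z, φ₁, φ₂, h₁, h₂, hcomm⟩ := diamond_here h (.there x hX)
      · exact .inl ⟨hφ.symm, hX.symm⟩
      · exact .inr ⟨Z, φ₂, φ₁, h₂, h₁, hcomm.symm⟩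
    · obtain ⟨rfl, rfl⟩ | ⟨Z, φ₁, φ₂, h₁, h₂, hcomm⟩ := ih hY
      · exact .inl ⟨rfl, rfl⟩
      · exact .inr ⟨x :: Z, idTensor φ₁, idTensor φ₂, .there x h₁, .there x h₂, by
          simp only [← idTensor_mul, hcomm]⟩

theorem Rewrite.reaches_unique {ψ : Module.End K Tensor} (h : Reaches Rewrite [] W φ)
    (h' : Reaches Rewrite [] W ψ) : φ = ψ :=
  h.unique weightedDiamond not_rewrite_nil h'

end Rewrite

/-! ### Web tensors of executions -/

theorem iterate_idTensor_vertexMap_apply (k : ℕ) (κ : Kind) (f : Tensor) (L : List St) :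
    idTensor^[k] (vertexMap κ) f L =
      match L.drop k with
      | a :: b :: R => vertexMap κ (fun T => f (L.take k ++ T)) (a :: b :: R)
      | _ => 0 := by
  obtain hL | hL := lt_or_ge L.length k
  · rw [iterate_idTensor_of_length_lt _ _ hL, List.drop_eq_nil_of_le hL.le]
  · conv_lhs => rw [← List.take_append_drop k L, iterate_idTensor_append _ _ _ _ (by simp [hL])]
    rcases L.drop k with _ | ⟨a, _ | ⟨b, R⟩⟩ <;> simp

theorem web_hstep {A B : List Bool} {P Q : List St} {s₁ s₂ : Bool} {j₁ j₂ j₁' j₂' : St}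
    (hl : A.length = P.length) (hs : s₁ ≠ s₂) (hp : HPat j₁ j₂ j₁' j₂')
    (e : Exec (A ++ (!s₁) :: (!s₂) :: B) (P ++ j₁' :: j₂' :: Q)) :
    web (.hstep A B P Q s₁ s₂ j₁ j₂ j₁' j₂' hl hs hp e) =
      idTensor^[A.length] (vertexMap .H) (web e) := by
  ext L
  rw [iterate_idTensor_vertexMap_apply, web]
  rcases L.drop A.length with _ | ⟨a, _ | ⟨b, R⟩⟩ <;> simp [vertexMap_H_cons_cons s₁]

theorem web_ustep {A B : List Bool} {P Q : List St} {s₁ s₂ : Bool} (hl : A.length = P.length)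
    (hs : s₁ ≠ s₂) (e : Exec (A ++ B) (P ++ Q)) :
    web (.ustep A B P Q s₁ s₂ hl hs e) = idTensor^[A.length] (vertexMap .U) (web e) := by
  ext L
  rw [iterate_idTensor_vertexMap_apply, web]
  rcases L.drop A.length with _ | ⟨a, _ | ⟨b, R⟩⟩ <;> simp [vertexMap_U_cons_cons s₁]

theorem web_ystep {A B : List Bool} {P Q : List St} {s : Bool} {j₁ j₂ j' : St}
    (hl : A.length = P.length) (hp : YPat j₁ j₂ j')
    (e : Exec (A ++ (!s) :: B) (P ++ j' :: Q)) :
    web (.ystep A B P Q s j₁ j₂ j' hl hp e) = idTensor^[A.length] (vertexMap .Y) (web e) := by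
  ext L
  rw [iterate_idTensor_vertexMap_apply, web]
  rcases L.drop A.length with _ | ⟨a, _ | ⟨b, R⟩⟩ <;> simp [vertexMap_Y_cons_cons s]

/-- The unit of the ground field, as a tensor with no factors. -/
def unitTensor : Tensor := Pi.single [] 1

theorem web_nil : web .nil = unitTensor := by
  ext L
  simp [web, unitTensor, Pi.single_apply]

theorem rule_of_hPat {s₁ s₂ : Bool} {j₁ j₂ j₁' j₂' : St} (hs : s₁ ≠ s₂)
    (hp : HPat j₁ j₂ j₁' j₂') :
    rule (s₁, j₁) (s₂, j₂) = some (.H, [(!s₁, j₁'), (!s₂, j₂')]) := by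
  cases hp <;> simp [rule, beq_false_of_ne hs]

theorem rule_of_yPat (s : Bool) {j₁ j₂ j' : St} (hp : YPat j₁ j₂ j') :
    rule (s, j₁) (s, j₂) = some (.Y, [(!s, j')]) := by
  cases hp <;> simp [rule]

theorem exists_reaches_of_rule {A B : List Bool} {P Q : List St} {x y : Letter} {κ : Kind}
    {M : Word} {f g : Tensor} (hl : A.length = P.length) (h : rule x y = some (κ, M))
    (hf : f = idTensor^[A.length] (vertexMap κ) g)
    (hg : ∃ φ, Reaches Rewrite [] (A.zip P ++ (M ++ B.zip Q)) φ ∧ g = φ unitTensor) :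
    ∃ φ, Reaches Rewrite [] (A.zip P ++ x :: y :: B.zip Q) φ ∧ f = φ unitTensor := by
  obtain ⟨φ, hφ, rfl⟩ := hg
  exact ⟨_, .step ((Rewrite.here h _).append_left (A.zip P)) hφ, by simp [hf, hl]⟩

theorem Exec.exists_reaches {S : List Bool} {J : List St} (e : Exec S J) :
    ∃ φ, Reaches Rewrite [] (S.zip J) φ ∧ web e = φ unitTensor := by
  induction e with
  | nil => exact ⟨1, .refl, web_nil⟩
  | hstep A B P Q s₁ s₂ j₁ j₂ j₁' j₂' hl hs hp e ih =>
    rw [List.zip_append hl] at ih ⊢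
    exact exists_reaches_of_rule hl (rule_of_hPat hs hp) (web_hstep hl hs hp e) ih
  | ustep A B P Q s₁ s₂ hl hs e ih =>
    rw [List.zip_append hl] at ih ⊢
    exact exists_reaches_of_rule (M := []) hl (by simp [rule, beq_false_of_ne hs])
      (web_ustep hl hs e) ih
  | ystep A B P Q s j₁ j₂ j' hl hp e ih =>
    rw [List.zip_append hl] at ih ⊢
    exact exists_reaches_of_rule hl (rule_of_yPat s hp) (web_ystep hl hp e) ih

theorem Exec.web_eq_of_reaches {S : List Bool} {J : List St} {φ : Module.End K Tensor}
    (e : Exec S J) (hφ : Reaches Rewrite [] (S.zip J) φ) : web e = φ unitTensor := by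
  obtain ⟨ψ, hψ, he⟩ := e.exists_reaches
  rw [he, Rewrite.reaches_unique hψ hφ]

theorem Step.cons {S S' : List Bool} {J J' : List St} (h : Step S J S' J') (s : Bool) (j : St) :
    Step (s :: S) (j :: J) (s :: S') (j :: J') := by
  cases h with
  | hstep A B P Q s₁ s₂ j₁ j₂ j₁' j₂' hl hs hp =>
    exact .hstep (s :: A) B (j :: P) Q s₁ s₂ j₁ j₂ j₁' j₂' (by simpa using hl) hs hp
  | ustep A B P Q s₁ s₂ hl hs =>
    exact .ustep (s :: A) B (j :: P) Q s₁ s₂ (by simpa using hl) hs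
  | ystep A B P Q s' j₁ j₂ j' hl hp =>
    exact .ystep (s :: A) B (j :: P) Q s' j₁ j₂ j' (by simpa using hl) hp

theorem step_of_rule {x y : Letter} {κ : Kind} {M : Word} (h : rule x y = some (κ, M)) (B : Word) :
    Step ((x :: y :: B).map Prod.fst) ((x :: y :: B).map Prod.snd)
      ((M ++ B).map Prod.fst) ((M ++ B).map Prod.snd) := by
  obtain ⟨s, a⟩ := x
  obtain ⟨t, b⟩ := y
  cases s <;> cases t <;> cases a <;> cases b <;> cases h <;>
    first
    | exact .hstep [] _ [] _ _ _ _ _ _ _ rfl (by decide) (by constructor)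
    | exact .ustep [] _ [] _ _ _ rfl (by decide)
    | exact .ystep [] _ [] _ _ _ _ _ rfl (by constructor)

theorem Rewrite.step {W X : Word} {φ : Module.End K Tensor} (h : Rewrite W φ X) :
    Step (W.map Prod.fst) (W.map Prod.snd) (X.map Prod.fst) (X.map Prod.snd) := by
  induction h with
  | here h B => exact step_of_rule h B
  | there x _ ih => exact ih.cons x.1 x.2

theorem Step.nonempty_exec {S S' : List Bool} {J J' : List St} (h : Step S J S' J')
    (e : Exec S' J') : Nonempty (Exec S J) := by
  cases h with
  | hstep A B P Q s₁ s₂ j₁ j₂ j₁' j₂' hl hs hp =>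
    exact ⟨.hstep A B P Q s₁ s₂ j₁ j₂ j₁' j₂' hl hs hp e⟩
  | ustep A B P Q s₁ s₂ hl hs => exact ⟨.ustep A B P Q s₁ s₂ hl hs e⟩
  | ystep A B P Q s j₁ j₂ j' hl hp => exact ⟨.ystep A B P Q s j₁ j₂ j' hl hp e⟩

theorem nonempty_exec_of_reaches {W : Word} {φ : Module.End K Tensor}
    (h : Reaches Rewrite [] W φ) : Nonempty (Exec (W.map Prod.fst) (W.map Prod.snd)) := by
  induction h with
  | refl => exact ⟨.nil⟩
  | step h _ ih => exact ih.elim h.step.nonempty_exec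

theorem exists_exec_of_reaches {S : List Bool} {J : List St} {φ : Module.End K Tensor}
    (hJ : J.length = S.length) (h : Reaches Rewrite [] (S.zip J) φ) :
    ∃ e : Exec S J, web e = φ unitTensor := by
  obtain ⟨e⟩ := nonempty_exec_of_reaches h
  rw [List.map_fst_zip hJ.ge, List.map_snd_zip hJ.le] at e
  exact ⟨e, e.web_eq_of_reaches h⟩

/-! ### Leading terms -/

instance : DecidableRel stLt := fun a b => inferInstanceAs (Decidable (stval a < stval b))

/-- The tensor `f` is `e_J` plus a combination of basis vectors `e_L` with `L` lexicographically
smaller than `J`. Strings of a different length are compared as well, which is harmless. -/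
def HasLeadingTerm (f : Tensor) (J : List St) : Prop :=
  f J = 1 ∧ ∀ L, List.Lex stLt J L → f L = 0

theorem hasLeadingTerm_unitTensor : HasLeadingTerm unitTensor [] := by
  refine ⟨Pi.single_eq_same _ _, fun L hL => ?_⟩
  cases hL
  rfl

theorem lex_append_iff {α : Type*} {r : α → α → Prop} {l₁ l₂ t₁ t₂ : List α}
    (h : l₁.length = l₂.length) :
    List.Lex r (l₁ ++ t₁) (l₂ ++ t₂) ↔ List.Lex r l₁ l₂ ∨ l₁ = l₂ ∧ List.Lex r t₁ t₂ := by
  induction l₁ generalizing l₂ with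
  | nil =>
    obtain rfl : l₂ = [] := by simpa [eq_comm] using h
    simp
  | cons a l₁ ih =>
    obtain _ | ⟨b, l₂⟩ := l₂
    · simp at h
    · simp only [List.cons_append, List.cons_lex_cons_iff, ih (Nat.succ.inj h), List.cons.injEq]
      tauto

section HasLeadingTerm

variable {x y : Letter} {κ : Kind} {M W X : Word} {f : Tensor} {φ : Module.End K Tensor}

theorem lex_bottom_of_lex_top (h : rule x y = some (κ, M)) :
    ∀ t ∈ entries κ, List.Lex stLt [x.2, y.2] t.2.1 → List.Lex stLt (M.map Prod.snd) t.2.2 := by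
  obtain ⟨s, a⟩ := x
  obtain ⟨t, b⟩ := y
  cases s <;> cases t <;> cases a <;> cases b <;> cases h <;> decide

theorem exists_filter_entries_eq_cons (h : rule x y = some (κ, M)) :
    ∃ l, (entries κ).filter (·.2.1 = [x.2, y.2]) = (0, [x.2, y.2], M.map Prod.snd) :: l ∧
      ∀ t ∈ l, List.Lex stLt (M.map Prod.snd) t.2.2 := by
  obtain ⟨s, a⟩ := x
  obtain ⟨t, b⟩ := y
  cases s <;> cases t <;> cases a <;> cases b <;> cases h <;> exact ⟨_, rfl, by decide⟩

theorem HasLeadingTerm.of_rule {J : List St} (h : rule x y = some (κ, M))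
    (hf : HasLeadingTerm f (M.map Prod.snd ++ J)) :
    HasLeadingTerm (vertexMap κ f) (x.2 :: y.2 :: J) := by
  have hzero (t : ℤ × List St × List St) (ht : t ∈ entries κ)
      (hlt : List.Lex stLt (M.map Prod.snd) t.2.2) (R : List St) :
      v ^ t.1 * f (t.2.2 ++ R) = 0 := by
    rw [hf.2 _ ((lex_append_iff ?_).2 (.inl hlt)), mul_zero]
    rw [List.length_map, length_of_rule h, (length_of_mem_entries κ t ht).2]
  have htop (R : List St) : vertexMap κ f (x.2 :: y.2 :: R) = f (M.map Prod.snd ++ R) := by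
    obtain ⟨l, hl, hlt⟩ := exists_filter_entries_eq_cons h
    rw [vertexMap_cons_cons, hl, List.map_cons, List.sum_cons, List.sum_eq_zero]
    · simp
    · refine List.forall_mem_map.2 fun t ht => hzero t ?_ (hlt t ht) R
      exact List.mem_of_mem_filter (hl ▸ List.mem_cons_of_mem _ ht)
  refine ⟨by rw [htop, hf.1], fun L hL => ?_⟩
  obtain _ | ⟨a, _ | ⟨b, R⟩⟩ := L
  · exact vertexMap_nil κ f
  · exact vertexMap_singleton κ f a
  obtain hlt | ⟨heq, hR⟩ := (lex_append_iff (l₁ := [x.2, y.2]) (l₂ := [a, b]) rfl).1 hL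
  · rw [vertexMap_cons_cons]
    refine List.sum_eq_zero (List.forall_mem_map.2 fun t ht => ?_)
    obtain ⟨ht, htop⟩ := List.mem_filter.1 ht
    refine hzero t ht (lex_bottom_of_lex_top h t ht ?_) R
    rwa [of_decide_eq_true htop]
  · obtain ⟨rfl, rfl⟩ : x.2 = a ∧ y.2 = b := by simpa using heq
    rw [htop, hf.2 _ ((lex_append_iff rfl).2 (.inr ⟨rfl, hR⟩))]

theorem Rewrite.hasLeadingTerm (h : Rewrite W φ X) (hf : HasLeadingTerm f (X.map Prod.snd)) :
    HasLeadingTerm (φ f) (W.map Prod.snd) := by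
  induction h generalizing f with
  | here h B => exact .of_rule h (by simpa using hf)
  | there x _ ih =>
    obtain ⟨h₁, h₀⟩ := hf
    refine ⟨(ih ⟨h₁, fun L hL => h₀ _ (.cons hL)⟩).1, fun L hL => ?_⟩
    cases hL with
    | @rel _ _ y L hxy =>
      have hf₀ : (fun T => f (y :: T)) = 0 := funext fun T => h₀ _ (.rel hxy)
      rw [idTensor_cons, hf₀, map_zero, Pi.zero_apply]
    | cons hL => exact (ih ⟨h₁, fun L hL => h₀ _ (.cons hL)⟩).2 _ hL

theorem Reaches.hasLeadingTerm (h : Reaches Rewrite [] W φ) :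
    HasLeadingTerm (φ unitTensor) (W.map Prod.snd) := by
  induction h with
  | refl => exact hasLeadingTerm_unitTensor
  | step h _ ih => exact h.hasLeadingTerm ih

end HasLeadingTerm

/-! ### Truncated coefficients -/

theorem ZeroConst.add {a b : K} (ha : ZeroConst a) (hb : ZeroConst b) : ZeroConst (a + b) := by
  obtain ⟨p, hp, rfl⟩ := ha
  obtain ⟨q, hq, rfl⟩ := hb
  exact ⟨p + q, by simp [hp, hq], by simp⟩

theorem ZeroConst.neg {a : K} (ha : ZeroConst a) : ZeroConst (-a) := by
  obtain ⟨p, hp, rfl⟩ := ha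
  exact ⟨-p, by simp [hp], by simp⟩

theorem ZeroConst.inv_v_pow_mul {a : K} (ha : ZeroConst a) (n : ℕ) : ZeroConst (v⁻¹ ^ n * a) := by
  obtain ⟨p, hp, rfl⟩ := ha
  exact ⟨Polynomial.X ^ n * p, by simp [Polynomial.mul_coeff_zero, hp], by simp⟩

theorem zeroConst_inv_v : ZeroConst v⁻¹ :=
  ⟨Polynomial.X, by simp, by simp⟩

theorem transcendental_inv_v : Transcendental ℤ v⁻¹ := by
  rw [Transcendental, IsAlgebraic.inv_iff]
  -- the instance found by default comes from `K` being a field of characteristic zero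
  let : Algebra ℚ K := RatFunc.instAlgebraOfPolynomial ℚ ℚ
  exact RatFunc.transcendental_X.restrictScalars (algebraMap ℤ ℚ).injective_int

theorem not_zeroConst_one : ¬ZeroConst 1 := by
  rintro ⟨p, hp, h⟩
  obtain rfl : p = 1 := transcendental_iff_injective.1 transcendental_inv_v (by simpa using h.symm)
  simp at hp

/-- The subgroup of Laurent polynomials `∑_{d < N} c_d v ^ d` with integer coefficients, that is
`v ^ N` times `v⁻¹ℤ[v⁻¹]`. -/
def exponentsBelow (N : ℤ) : AddSubgroup K where
  carrier := {c | ZeroConst (v ^ (-N) * c)}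
  zero_mem' := ⟨0, by simp, by simp⟩
  add_mem' ha hb := by simpa [mul_add] using ha.add hb
  neg_mem' ha := by simpa using ha.neg

theorem mem_exponentsBelow {N : ℤ} {c : K} : c ∈ exponentsBelow N ↔ ZeroConst (v ^ (-N) * c) :=
  Iff.rfl

theorem mem_exponentsBelow_zero {c : K} : c ∈ exponentsBelow 0 ↔ ZeroConst c := by
  simp [mem_exponentsBelow]

theorem exponentsBelow_mono : Monotone exponentsBelow := by
  intro M N h c hc
  obtain ⟨n, rfl⟩ := Int.le.dest h
  have : v ^ (-(M + n)) * c = v⁻¹ ^ n * (v ^ (-M) * c) := by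
    rw [neg_add_rev, zpow_add₀ v_ne_zero, zpow_neg, zpow_natCast, inv_pow, mul_assoc]
  rw [mem_exponentsBelow, this]
  exact hc.inv_v_pow_mul n

theorem zpow_mul_mem_exponentsBelow {N : ℤ} {c : K} (d : ℤ) (hc : c ∈ exponentsBelow N) :
    v ^ d * c ∈ exponentsBelow (N + d) := by
  rwa [mem_exponentsBelow, ← mul_assoc, ← zpow_add₀ v_ne_zero, neg_add, neg_add_cancel_right]

theorem zpow_mem_exponentsBelow {d N : ℤ} (h : d < N) : v ^ d ∈ exponentsBelow N := by
  have hd : v ^ d ∈ exponentsBelow (d + 1) := by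
    simpa [mem_exponentsBelow, ← zpow_add₀ v_ne_zero] using zeroConst_inv_v
  exact exponentsBelow_mono (Int.add_one_le_of_lt h) hd

/-- The tensors with all coordinates in `exponentsBelow N`. -/
def tensorsBelow (N : ℤ) : AddSubgroup Tensor :=
  AddSubgroup.pi Set.univ fun _ => exponentsBelow N

theorem mem_tensorsBelow {N : ℤ} {f : Tensor} :
    f ∈ tensorsBelow N ↔ ∀ L, f L ∈ exponentsBelow N := by
  simp [tensorsBelow, AddSubgroup.mem_pi]

theorem tensorsBelow_mono : Monotone tensorsBelow := fun _ _ h _ hf =>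
  mem_tensorsBelow.2 fun L => exponentsBelow_mono h (mem_tensorsBelow.1 hf L)

theorem zpow_smul_mem_tensorsBelow {N : ℤ} {f : Tensor} (d : ℤ) (hf : f ∈ tensorsBelow N) :
    v ^ d • f ∈ tensorsBelow (N + d) :=
  mem_tensorsBelow.2 fun L => zpow_mul_mem_exponentsBelow d (mem_tensorsBelow.1 hf L)

theorem zpow_smul_single_mem_tensorsBelow {d N : ℤ} (h : d < N) (L : List St) :
    v ^ d • Pi.single L 1 ∈ tensorsBelow N := by
  refine mem_tensorsBelow.2 fun T => ?_
  rw [Pi.smul_apply, Pi.single_apply]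
  split_ifs <;> simp [zpow_mem_exponentsBelow h, zero_mem]

theorem replacePrefix_mem_tensorsBelow (A B : List St) {N : ℤ} {f : Tensor}
    (hf : f ∈ tensorsBelow N) : replacePrefix A B f ∈ tensorsBelow N := by
  refine mem_tensorsBelow.2 fun L => ?_
  rw [replacePrefix_apply]
  cases L.dropPrefix? A with
  | none => exact zero_mem _
  | some R => exact mem_tensorsBelow.1 hf _

/-- The largest exponent of `v` among the matrix entries of the map attached to a growth rule. -/
def gain : Kind → ℤ
  | .H => 1
  | .U => 0
  | .Y => 0

theorem le_gain_of_mem_entries (κ : Kind) : ∀ t ∈ entries κ, t.1 ≤ gain κ := by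
  cases κ <;> decide

theorem vertexMap_mem_tensorsBelow (κ : Kind) {N : ℤ} {f : Tensor} (hf : f ∈ tensorsBelow N) :
    vertexMap κ f ∈ tensorsBelow (N + gain κ) := by
  rw [vertexMap_apply]
  refine list_sum_mem (List.forall_mem_map.2 fun t ht => ?_)
  refine tensorsBelow_mono (add_le_add_right (le_gain_of_mem_entries κ t ht) N) ?_
  exact zpow_smul_mem_tensorsBelow _ (replacePrefix_mem_tensorsBelow _ _ hf)

theorem iterate_idTensor_mem_tensorsBelow {φ : Module.End K Tensor} {M N : ℤ}
    (hφ : ∀ f ∈ tensorsBelow M, φ f ∈ tensorsBelow N) (k : ℕ) :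
    ∀ f ∈ tensorsBelow M, idTensor^[k] φ f ∈ tensorsBelow N := by
  induction k with
  | zero => exact hφ
  | succ k ih =>
    rw [Function.iterate_succ_apply']
    refine fun f hf => mem_tensorsBelow.2 fun
      | [] => zero_mem _
      | x :: L => mem_tensorsBelow.1 (ih _ (mem_tensorsBelow.2 fun T => ?_)) L
    exact mem_tensorsBelow.1 hf _

/-- The tensor `∑ v ^ d e_L`, summed over the listed pairs `(d, L)`. -/
def termSum (T : List (ℤ × List St)) : Tensor :=
  (T.map fun t => v ^ t.1 • Pi.single t.2 1).sum

theorem termSum_cons (t : ℤ × List St) (T : List (ℤ × List St)) :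
    termSum (t :: T) = v ^ t.1 • Pi.single t.2 1 + termSum T := by
  simp [termSum]

theorem termSum_append (T₁ T₂ : List (ℤ × List St)) :
    termSum (T₁ ++ T₂) = termSum T₁ + termSum T₂ := by
  simp [termSum]

theorem termSum_flatMap {α : Type*} (l : List α) (g : α → List (ℤ × List St)) :
    termSum (l.flatMap g) = (l.map fun a => termSum (g a)).sum := by
  induction l with
  | nil => rfl
  | cons a l ih => rw [List.flatMap_cons, termSum_append, ih, List.map_cons, List.sum_cons]

theorem termSum_map_add_fst (d : ℤ) (T : List (ℤ × List St)) :
    termSum (T.map fun t => (d + t.1, t.2)) = v ^ d • termSum T := by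
  induction T with
  | nil => simp [termSum]
  | cons t T ih => simp [termSum_cons, ih, zpow_add₀ v_ne_zero, mul_smul]

theorem termSum_map_cons_apply (x y : St) (T : List (ℤ × List St)) (L : List St) :
    termSum (T.map fun t => (t.1, x :: t.2)) (y :: L) = if x = y then termSum T L else 0 := by
  induction T with
  | nil => simp [termSum]
  | cons t T ih =>
    simp only [List.map_cons, termSum_cons, Pi.add_apply, Pi.smul_apply, Pi.single_apply, ih]
    split_ifs <;> simp_all

/-- The column of index `e_L` of the matrix of `id^{⊗ k} ⊗ κ ⊗ id ⊗ ⋯ ⊗ id`, as a list of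
terms. -/
def column (κ : Kind) : ℕ → List St → List (ℤ × List St)
  | 0, L => (entries κ).flatMap fun t =>
      (L.dropPrefix? t.2.2).toList.map fun R => (t.1, t.2.1 ++ R)
  | _ + 1, [] => []
  | k + 1, x :: L => (column κ k L).map fun t => (t.1, x :: t.2)

theorem single_cons (x y : St) (L : List St) :
    (fun T => (Pi.single (x :: L) 1 : Tensor) (y :: T)) = if x = y then Pi.single L 1 else 0 := by
  ext T
  split_ifs with h <;> simp [Pi.single_apply, h, eq_comm]

theorem termSum_column_succ_nil (κ : Kind) (k : ℕ) (L : List St) :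
    termSum (column κ (k + 1) L) [] = 0 := by
  obtain _ | ⟨x, L⟩ := L
  · rfl
  · rw [column]
    induction column κ k L with
    | nil => rfl
    | cons t T ih => simp [termSum_cons, ih]

theorem replacePrefix_single (A B L : List St) :
    replacePrefix A B (Pi.single L 1) =
      ((L.dropPrefix? B).toList.map fun R => Pi.single (A ++ R) 1).sum := by
  ext T
  rw [replacePrefix_apply]
  cases hT : T.dropPrefix? A with
  | none =>
    cases hL : L.dropPrefix? B with
    | none => rfl
    | some R =>
      have hne : T ≠ A ++ R := fun h => by simp [dropPrefix?_eq_some_iff_eq_append.2 h] at hT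
      simp [hne]
  | some R =>
    obtain rfl := dropPrefix?_eq_some_iff_eq_append.1 hT
    cases hL : L.dropPrefix? B with
    | none =>
      have hne : B ++ R ≠ L := fun h => by simp [dropPrefix?_eq_some_iff_eq_append.2 h.symm] at hL
      simp [hne]
    | some R' =>
      obtain rfl := dropPrefix?_eq_some_iff_eq_append.1 hL
      simp [Pi.single_apply]

theorem termSum_column (κ : Kind) (k : ℕ) (L : List St) :
    termSum (column κ k L) = idTensor^[k] (vertexMap κ) (Pi.single L 1) := by
  induction k generalizing L with
  | zero =>
    rw [column, termSum_flatMap, Function.iterate_zero_apply, vertexMap_apply]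
    refine congrArg List.sum (List.map_congr_left fun t _ => ?_)
    rw [replacePrefix_single, List.smul_sum, termSum, List.map_map, List.map_map]
    rfl
  | succ k ih =>
    rw [Function.iterate_succ_apply']
    ext (_ | ⟨y, T⟩)
    · rw [idTensor_nil, termSum_column_succ_nil]
    · obtain _ | ⟨x, L⟩ := L
      · exact (congrFun (map_zero (idTensor^[k] (vertexMap κ))) T).symm
      · rw [idTensor_cons, single_cons, column, termSum_map_cons_apply, ih]
        split_ifs <;> simp

/-- The image of a sum of terms under `id^{⊗ k} ⊗ κ ⊗ id ⊗ ⋯ ⊗ id`. -/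
def pushForward (κ : Kind) (k : ℕ) (T : List (ℤ × List St)) : List (ℤ × List St) :=
  T.flatMap fun t => (column κ k t.2).map fun u => (t.1 + u.1, u.2)

theorem termSum_pushForward (κ : Kind) (k : ℕ) (T : List (ℤ × List St)) :
    termSum (pushForward κ k T) = idTensor^[k] (vertexMap κ) (termSum T) := by
  simp only [pushForward, termSum_flatMap, termSum_map_add_fst, termSum_column]
  simp [termSum, map_list_sum, Function.comp_def]

/-- The listed terms describe `f` up to coefficients with all exponents of `v` below `N`. -/
def IsTruncation (N : ℤ) (f : Tensor) (T : List (ℤ × List St)) : Prop :=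
  f - termSum T ∈ tensorsBelow N

theorem IsTruncation.pushForward {N : ℤ} {f : Tensor} {T : List (ℤ × List St)}
    (h : IsTruncation N f T) (κ : Kind) (k : ℕ) :
    IsTruncation (N + gain κ) (idTensor^[k] (vertexMap κ) f) (pushForward κ k T) := by
  rw [IsTruncation, termSum_pushForward, ← map_sub]
  exact iterate_idTensor_mem_tensorsBelow (fun _ => vertexMap_mem_tensorsBelow κ) k _ h

theorem IsTruncation.filter {N : ℤ} {f : Tensor} {T : List (ℤ × List St)}
    (h : IsTruncation N f T) : IsTruncation N f (T.filter (N ≤ ·.1)) := by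
  have hrest : termSum T - termSum (T.filter (N ≤ ·.1)) ∈ tensorsBelow N := by
    clear h
    induction T with
    | nil => simp [zero_mem]
    | cons t T ih =>
      by_cases ht : N ≤ t.1
      · simpa [ht, termSum_cons] using ih
      · rw [List.filter_cons_of_neg (by simpa using ht), termSum_cons, add_sub_assoc]
        exact add_mem (zpow_smul_single_mem_tensorsBelow (not_le.1 ht) _) ih
  simpa [IsTruncation] using add_mem h hrest

/-- The first applicable growth rule whose type satisfies `p`, with its position and its
outcome. -/
def findRewrite (p : Kind → Bool) : Word → Option (ℕ × Kind × Word)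
  | x :: y :: B =>
    (((rule x y).filter fun r => p r.1).map fun r => (0, r.1, r.2 ++ B)).or
      ((findRewrite p (y :: B)).map fun q => (q.1 + 1, q.2.1, x :: q.2.2))
  | _ => none

theorem rewrite_of_findRewrite {p : Kind → Bool} {W X : Word} {k : ℕ} {κ : Kind}
    (h : findRewrite p W = some (k, κ, X)) : Rewrite W (idTensor^[k] (vertexMap κ)) X := by
  induction W generalizing k X with
  | nil => simp [findRewrite] at h
  | cons x W ih =>
    obtain _ | ⟨y, B⟩ := W
    · simp [findRewrite] at h
    rw [findRewrite, Option.or_eq_some_iff] at h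
    obtain h | ⟨-, h⟩ := h
    · obtain ⟨⟨κ, M⟩, hr, h⟩ := Option.map_eq_some_iff.1 h
      cases h
      exact .here (Option.filter_eq_some_iff.1 hr).1 B
    · obtain ⟨⟨k, κ, X⟩, hq, h⟩ := Option.map_eq_some_iff.1 h
      cases h
      rw [Function.iterate_succ_apply']
      exact .there x (ih hq)

/-- A growth step applicable to a word. H-rules are postponed, since they are the ones that raise
exponents. -/
def chooseRewrite (W : Word) : Option (ℕ × Kind × Word) :=
  (findRewrite (· != .H) W).or (findRewrite (fun _ => true) W)

theorem rewrite_of_chooseRewrite {W X : Word} {k : ℕ} {κ : Kind}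
    (h : chooseRewrite W = some (k, κ, X)) : Rewrite W (idTensor^[k] (vertexMap κ)) X := by
  obtain h | ⟨-, h⟩ := Option.or_eq_some_iff.1 h <;> exact rewrite_of_findRewrite h

/-- The terms `v ^ d e_L` with `N ≤ d` of the web tensor of a word, without collecting equal ones;
`none` if the growth algorithm does not end within the given number of steps. -/
def leadingTerms : ℕ → ℤ → Word → Option (List (ℤ × List St))
  | _, _, [] => some [(0, [])]
  | 0, _, _ => none
  | n + 1, N, W =>
    (chooseRewrite W).bind fun q => (leadingTerms n (N - gain q.2.1) q.2.2).map fun T =>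
      (pushForward q.2.1 q.1 T).filter (N ≤ ·.1)

theorem exists_reaches_nil {N : ℤ} {T : List (ℤ × List St)} (h : some [(0, [])] = some T) :
    ∃ φ, Reaches Rewrite [] [] φ ∧ IsTruncation N (φ unitTensor) T := by
  cases h
  exact ⟨1, .refl, by simp [IsTruncation, termSum, unitTensor, zero_mem]⟩

theorem exists_reaches_of_leadingTerms {n : ℕ} {N : ℤ} {W : Word} {T : List (ℤ × List St)}
    (h : leadingTerms n N W = some T) :
    ∃ φ, Reaches Rewrite [] W φ ∧ IsTruncation N (φ unitTensor) T := by
  induction n generalizing N W T with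
  | zero =>
    obtain _ | ⟨x, W⟩ := W
    · exact exists_reaches_nil h
    · simp [leadingTerms] at h
  | succ n ih =>
    obtain _ | ⟨x, W⟩ := W
    · exact exists_reaches_nil h
    obtain ⟨⟨k, κ, X⟩, hq, h⟩ := Option.bind_eq_some_iff.1 h
    obtain ⟨T, hT, rfl⟩ := Option.map_eq_some_iff.1 h
    obtain ⟨φ, hφ, htrunc⟩ := ih hT
    refine ⟨_, .step (rewrite_of_chooseRewrite hq) hφ, .filter ?_⟩
    simpa using htrunc.pushForward κ k

section Web

variable {n : ℕ} {S : List Bool} {J : List St}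

theorem isTruncation_web_of_leadingTerms {N : ℤ} {T : List (ℤ × List St)}
    (h : leadingTerms n N (S.zip J) = some T) (e : Exec S J) :
    IsTruncation N (web e) T := by
  obtain ⟨φ, hφ, hT⟩ := exists_reaches_of_leadingTerms h
  rwa [e.web_eq_of_reaches hφ]

theorem web_apply_self (hJ : J.length = S.length) (e : Exec S J) : web e J = 1 := by
  obtain ⟨φ, hφ, he⟩ := e.exists_reaches
  have := hφ.hasLeadingTerm.1
  rwa [List.map_snd_zip hJ.le, ← he] at this

theorem negExpProp_of_leadingTerms (hJ : J.length = S.length)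
    (h : leadingTerms n 0 (S.zip J) = some [(0, J)]) (e : Exec S J) :
    NegExpProp S.length (web e) J := by
  refine ⟨web_apply_self hJ e, fun L _ hL => mem_exponentsBelow_zero.1 ?_⟩
  have := mem_tensorsBelow.1 (isTruncation_web_of_leadingTerms h e) L
  simpa [termSum, hL] using this

theorem exists_not_negExpProp_of_leadingTerms {L : List St} (hJ : J.length = S.length)
    (hL : L.length = S.length) (hne : L ≠ J)
    (h : leadingTerms n 0 (S.zip J) = some [(0, J), (0, L)]) :
    ∃ e : Exec S J, ¬NegExpProp S.length (web e) J := by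
  obtain ⟨φ, hφ, -⟩ := exists_reaches_of_leadingTerms h
  obtain ⟨e, -⟩ := exists_exec_of_reaches hJ hφ
  refine ⟨e, fun hneg => not_zeroConst_one ?_⟩
  have hsub : ZeroConst (web e L - 1) := by
    have := mem_tensorsBelow.1 (isTruncation_web_of_leadingTerms h e) L
    simpa [termSum, hne, mem_exponentsBelow_zero] using this
  simpa using (hneg.2 L hL hne).add hsub.neg

end Web

/-! ### Dominant state strings -/

/-- The lattice path of `(S, J)`, started at `p`, stays in the dominant chamber and ends at the
origin. -/
def DominantFrom (p : ℤ × ℤ) (S : List Bool) (J : List St) : Prop :=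
  J.length = S.length ∧ (∀ k, 0 ≤ p + wtSum (S.take k) (J.take k)) ∧ p + wtSum S J = 0

section Dominant

variable {p : ℤ × ℤ} {s : Bool} {S : List Bool} {j : St} {J : List St}

theorem wtSum_nil : wtSum [] [] = 0 := rfl

theorem wtSum_cons (s : Bool) (S : List Bool) (j : St) (J : List St) :
    wtSum (s :: S) (j :: J) = wt s j + wtSum S J := by
  simp [wtSum]

theorem dominantFrom_zero : DominantFrom 0 S J ↔ Dominant S J := by
  simp [DominantFrom, Dominant, Prod.le_def]

theorem dominantFrom_nil : DominantFrom p [] J ↔ J = [] ∧ p = 0 := by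
  rw [DominantFrom, List.length_nil, List.length_eq_zero_iff]
  constructor
  · rintro ⟨rfl, -, h⟩
    simpa [wtSum] using h
  · rintro ⟨rfl, rfl⟩
    simp [wtSum]

theorem dominantFrom_cons :
    DominantFrom p (s :: S) (j :: J) ↔ 0 ≤ p ∧ DominantFrom (p + wt s j) S J := by
  have hpath : (∀ k, 0 ≤ p + wtSum ((s :: S).take k) ((j :: J).take k)) ↔
      0 ≤ p ∧ ∀ k, 0 ≤ p + wt s j + wtSum (S.take k) (J.take k) := by
    rw [← Nat.and_forall_add_one]
    simp [wtSum_cons, wtSum_nil, add_assoc]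
  simp only [DominantFrom, List.length_cons, Nat.add_right_cancel_iff, wtSum_cons, hpath,
    ← add_assoc]
  tauto

theorem DominantFrom.nonneg (h : DominantFrom p S J) : 0 ≤ p := by
  simpa [wtSum] using h.2.1 0

theorem DominantFrom.fst_add_snd_le (h : DominantFrom p S J) : p.1 + p.2 ≤ S.length := by
  induction S generalizing p J with
  | nil => simp [(dominantFrom_nil.1 h).2]
  | cons s S ih =>
    obtain _ | ⟨j, J⟩ := J
    · simp [DominantFrom] at h
    have hstep : -1 ≤ (wt s j).1 + (wt s j).2 := by cases s <;> cases j <;> decide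
    have := ih (dominantFrom_cons.1 h).2
    simp only [Prod.fst_add, Prod.snd_add] at this
    push_cast [List.length_cons]
    linarith

/-- The state strings `J` for `S` with `DominantFrom p S J`, found by a search that abandons a
path once it is too far from the origin to return. -/
def dominantStrings : ℤ × ℤ → List Bool → List (List St)
  | p, [] => if p = 0 then [[]] else []
  | p, s :: S =>
    ([St.pos, .zero, .neg].filter fun j =>
      let q := p + wt s j
      0 ≤ q ∧ q.1 + q.2 ≤ S.length).flatMap fun j =>
        (dominantStrings (p + wt s j) S).map (j :: ·)

theorem mem_dominantStrings (hp : 0 ≤ p) : J ∈ dominantStrings p S ↔ DominantFrom p S J := by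
  induction S generalizing p J with
  | nil =>
    rw [dominantStrings, dominantFrom_nil]
    split_ifs with h <;> simp [h]
  | cons s S ih =>
    simp only [dominantStrings, List.mem_flatMap, List.mem_filter, List.mem_map, decide_eq_true_eq]
    constructor
    · rintro ⟨j, ⟨-, hq, -⟩, L, hL, rfl⟩
      exact dominantFrom_cons.2 ⟨hp, (ih hq).1 hL⟩
    · intro h
      obtain _ | ⟨j, L⟩ := J
      · simp [DominantFrom] at h
      have hL := (dominantFrom_cons.1 h).2
      exact ⟨j, ⟨by cases j <;> decide, hL.nonneg, hL.fst_add_snd_le⟩, L,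
        (ih hL.nonneg).2 hL, rfl⟩

theorem dominant_iff_mem_dominantStrings : Dominant S J ↔ J ∈ dominantStrings 0 S := by
  rw [mem_dominantStrings le_rfl, dominantFrom_zero]

end Dominant

/-- `J` is a dominant state string for `S` whose web tensor lacks the negative-exponent
property. -/
def WebFails (S : List Bool) (J : List St) : Prop :=
  Dominant S J ∧ ∃ e : Exec S J, ¬NegExpProp S.length (web e) J

/-! ### Sign reversal -/

section SignReversal

variable {W X : Word} {φ : Module.End K Tensor} {S : List Bool} {J : List St}

theorem rule_not {x y : Letter} {κ : Kind} {M : Word} (h : rule x y = some (κ, M)) :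
    rule (x.map not id) (y.map not id) = some (κ, M.map (Prod.map not id)) := by
  obtain ⟨s, a⟩ := x
  obtain ⟨t, b⟩ := y
  cases s <;> cases t <;> cases a <;> cases b <;> cases h <;> rfl

theorem Rewrite.map_not (h : Rewrite W φ X) :
    Rewrite (W.map (Prod.map not id)) φ (X.map (Prod.map not id)) := by
  induction h with
  | here h B => exact .of_rule (rule_not h) List.map_append.symm
  | there x _ ih => exact .there _ ih

theorem Reaches.map_not (h : Reaches Rewrite [] W φ) :
    Reaches Rewrite [] (W.map (Prod.map not id)) φ := by
  induction h with
  | refl => exact .refl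
  | step h _ ih => exact .step h.map_not ih

theorem wt_not (s : Bool) (j : St) : wt (!s) j = (wt s j).swap := by
  cases s <;> cases j <;> rfl

theorem wtSum_map_not (S : List Bool) (J : List St) : wtSum (S.map not) J = (wtSum S J).swap := by
  induction S generalizing J with
  | nil => rfl
  | cons s S ih =>
    obtain _ | ⟨j, J⟩ := J
    · simp [wtSum]
    · rw [List.map_cons, wtSum_cons, wtSum_cons, wt_not, ih, Prod.swap_add]

theorem Dominant.map_not (h : Dominant S J) : Dominant (S.map not) J := by
  refine ⟨by simpa using h.1, fun k => ?_, ?_⟩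
  · simpa [← List.map_take, wtSum_map_not] using (h.2.1 k).symm
  · rw [wtSum_map_not, h.2.2, Prod.swap_zero]

theorem WebFails.map_not (h : WebFails S J) : WebFails (S.map not) J := by
  obtain ⟨hJ, e, he⟩ := h
  obtain ⟨φ, hφ, hweb⟩ := e.exists_reaches
  have hnot := hφ.map_not
  rw [← List.zip_map, List.map_id] at hnot
  obtain ⟨e', hweb'⟩ := exists_exec_of_reaches hJ.map_not.1 hnot
  exact ⟨hJ.map_not, e', by rwa [hweb', ← hweb, List.length_map]⟩

theorem webFails_map_not : WebFails (S.map not) J ↔ WebFails S J :=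
  ⟨fun h => by simpa [Function.comp_def] using h.map_not, WebFails.map_not⟩

end SignReversal

theorem base_rotate_add_two (r : ℕ) : base.rotate (r + 2) = (base.rotate r).map not := by
  rw [List.map_rotate, Nat.add_comm, ← List.rotate_rotate]
  rfl

theorem existsUnique_webFails_of_leadingTerms {n : ℕ} {S : List Bool} {J L : List St}
    (hJ : J ∈ dominantStrings 0 S) (hL : L.length = S.length) (hne : L ≠ J)
    (hbad : leadingTerms n 0 (S.zip J) = some [(0, J), (0, L)])
    (hgood : ∀ J' ∈ dominantStrings 0 S, J' ≠ J →
      leadingTerms n 0 (S.zip J') = some [(0, J')]) :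
    ∃! J, WebFails S J := by
  have hJ := dominant_iff_mem_dominantStrings.2 hJ
  refine ⟨J, ⟨hJ, exists_not_negExpProp_of_leadingTerms hJ.1 hL hne hbad⟩, ?_⟩
  rintro J' ⟨hJ', e, he⟩
  by_contra hne'
  have hlead := hgood J' (dominant_iff_mem_dominantStrings.1 hJ') hne'
  exact he (negExpProp_of_leadingTerms hJ'.1 hlead e)

/-- The failing state string for `base`, whose first two signs agree. -/
def equalStartFailure : List St :=
  [.pos, .pos, .pos, .pos, .zero, .zero, .zero, .zero, .neg, .neg, .neg, .neg]

/-- Besides `equalStartFailure`, the index of the only coefficient with nonzero constant term. -/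
def equalStartWitness : List St :=
  [.pos, .pos, .neg, .pos, .neg, .pos, .neg, .pos, .neg, .pos, .neg, .neg]

/-- The failing state string for `base.rotate 1`, whose first two signs differ. -/
def unequalStartFailure : List St :=
  [.pos, .pos, .pos, .zero, .pos, .zero, .zero, .neg, .zero, .neg, .neg, .neg]

/-- Besides `unequalStartFailure`, the index of the only coefficient with nonzero constant
term. -/
def unequalStartWitness : List St :=
  [.pos, .neg, .pos, .neg, .pos, .neg, .pos, .neg, .pos, .neg, .pos, .neg]

theorem existsUnique_webFails_base : ∃! J, WebFails base J :=
  existsUnique_webFails_of_leadingTerms (n := 40) (J := equalStartFailure)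
    (L := equalStartWitness) (by decide +kernel) (by decide +kernel) (by decide +kernel)
    (by decide +kernel) (by decide +kernel)

theorem existsUnique_webFails_base_rotate_one : ∃! J, WebFails (base.rotate 1) J :=
  existsUnique_webFails_of_leadingTerms (n := 40) (J := unequalStartFailure)
    (L := unequalStartWitness) (by decide +kernel) (by decide +kernel) (by decide +kernel)
    (by decide +kernel) (by decide +kernel)

/-- for each of the four cyclic rotations `S` of
`(+,+,−,−,+,+,−,−,+,+,−,−)` there is exactly one dominant state string `J`
whose web tensor fails the negative-exponent property; every other dominant
state string has it. -/
theorem web_negExp_unique_failure :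
    ∀ S : List Bool, (∃ r : ℕ, S = base.rotate r) →
    ∃! J : List St, Dominant S J ∧
      ∃ e : Exec S J, ¬ NegExpProp S.length (web e) J := by
  rintro _ ⟨r, rfl⟩
  change ∃! J, WebFails (base.rotate r) J
  induction r using Nat.twoStepInduction with
  | zero => exact existsUnique_webFails_base
  | one => exact existsUnique_webFails_base_rotate_one
  | more r ih _ => simpa only [base_rotate_add_two, webFails_map_not] using ih

end
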